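/- arXiv:2404.06315 — 3 statements merged into one kernel-verified Lean document; each statement's English description precedes it below -/
import Mathlib

section
/- Theorem (ordinary weights; proved by Breuil–Herzig for K = ℚ_p and extended in this paper to arbitrary K): the only weights that occur with multiplicity 1 in L^⊗|_T are the ordinary weights. Combinatorially: for all integers n ≥ 1, d ≥ 1 and every function μ : {1,…,n} → ℤ≥0, the number of families (S_{j,i})_{1≤j≤d, 1≤i≤n−1} of subsets of {1,…,n} with |S_{j,i}| = i and, for every k ∈ {1,…,n}, μ(k) = #{(j,i) : k ∈ S_{j,i}}, equals 1 if and only if there exists a permutation w of {1,…,n} with μ(k) = d·(n − w(k)) for all k (i.e. μ is d times a permutation of (n−1, n−2, …, 1, 0)). -/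
/-!
A family of multiplicity one is rigid under exchanges: if two members `S`, `S'` of a family are
incomparable, with `a ∈ S \ S'` and `b ∈ S' \ S`, then trading `a` for `b` in `S` and `b` for `a`
in `S'` yields a different family of the same weight (`exists_exchange`). Hence the members of the
only family of weight `μ` form a chain; as their cardinalities are prescribed, they do not depend
on `j` and form a complete flag, so `μ` is `d` times a permutation of `(n-1, …, 0)`
(`exists_perm_of_flag`).

Conversely let `μ = d • (n - 1 - w)`. The initial segments `T m = {k | w k < m}` provide a family
of weight `μ`. For any family `F` of weight `μ`, the sum of `μ` over `T m` is the sum over `(j, i)`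
of `|F j i ∩ T m| ≤ min (|F j i|) m`, and the flag family attains every one of these bounds, so `F`
attains them as well; `m = |F j i|` gives `F j i = T m` (`eq_of_forall_weight_eq`).
-/

/-- The weight of a family of finite sets: the number of members that contain `k`. -/
noncomputable def familyWeight {n : ℕ} {P : Type*} (F : P → Finset (Fin n)) (k : Fin n) : ℕ :=
  Nat.card {p : P // k ∈ F p}

/-- Double counting of the incidences between `T` and the members of the family. -/
lemma sum_familyWeight {n : ℕ} {P : Type*} [Fintype P] (F : P → Finset (Fin n))
    (T : Finset (Fin n)) :
    ∑ k ∈ T, familyWeight F k = ∑ p, (F p ∩ T).card := by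
  have h1 : ∀ k, familyWeight F k = ∑ p, if k ∈ F p then 1 else 0 := by
    intro k
    rw [familyWeight, Nat.card_eq_fintype_card, Fintype.card_subtype, Finset.card_filter]
  simp_rw [h1]
  rw [Finset.sum_comm]
  refine Finset.sum_congr rfl fun p _ => ?_
  rw [← Finset.card_filter, Finset.inter_comm, Finset.filter_mem_eq_inter]

/-- Exchanging `a` and `b` between two incomparable members changes the family, but neither the
cardinalities of its members nor its weight. -/
lemma exists_exchange {n : ℕ} {P : Type*} (F : P → Finset (Fin n)) (p q : P) (a b : Fin n)
    (hap : a ∈ F p) (haq : a ∉ F q) (hbq : b ∈ F q) (hbp : b ∉ F p) :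
    ∃ F' : P → Finset (Fin n), F' ≠ F ∧ (∀ r, (F' r).card = (F r).card) ∧
      ∀ k, familyWeight F' k = familyWeight F k := by
  classical
  have hab : a ≠ b := by rintro rfl; exact hbp hap
  have hpq : p ≠ q := by rintro rfl; exact haq hap
  -- Both `F p` and `F q` are moved by the transposition `(a b)`.
  let F' : P → Finset (Fin n) := fun r =>
    if r = p ∨ r = q then (F r).map (Equiv.swap a b).toEmbedding else F r
  have mem : ∀ r k, k ∈ F' r ↔
      if r = p ∨ r = q then Equiv.swap a b k ∈ F r else k ∈ F r := by
    intro r k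
    simp only [F']
    split_ifs
    · rw [Finset.mem_map_equiv, Equiv.symm_swap]
    · rfl
  refine ⟨F', fun h => ?_, fun r => ?_, fun k => ?_⟩
  · have := mem p b
    simp [h, hbp, hap] at this
  · simp only [F']
    split_ifs <;> simp
  · by_cases hk : k = a ∨ k = b
    -- On `a` and `b` the exchange has the same effect as interchanging the indices `p` and `q`.
    · refine Nat.card_congr ((Equiv.swap p q).subtypeEquiv fun r => ?_)
      rw [mem]
      by_cases hrp : r = p
      · subst hrp
        rcases hk with rfl | rfl <;> simp [*]
      by_cases hrq : r = q
      · subst hrq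
        rcases hk with rfl | rfl <;> simp [*]
      · rw [Equiv.swap_apply_of_ne_of_ne hrp hrq]
        simp [hrp, hrq]
    · push Not at hk
      refine Nat.card_congr (Equiv.subtypeEquivRight fun r => ?_)
      rw [mem, Equiv.swap_apply_of_ne_of_ne hk.1 hk.2, ite_self]

/-- The number of steps of a complete flag that contain a given element is, in terms of the
position `w k` at which the element enters the flag, `n - 1 - w k`. -/
lemma exists_perm_of_flag {n : ℕ} (T : Fin (n - 1) → Finset (Fin n))
    (hcard : ∀ i, (T i).card = (i : ℕ) + 1) (hT : Monotone T) :
    ∃ w : Equiv.Perm (Fin n), ∀ k, familyWeight T k = n - 1 - (w k : ℕ) := by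
  have h : ∀ m : Fin n, ∃ k : Fin n, ∀ i : Fin (n - 1), k ∈ T i ↔ (m : ℕ) ≤ i := by
    intro m
    -- `A` and `B` are the steps of sizes `m` and `m + 1`, including the trivial ones `∅`, `univ`.
    obtain ⟨A, hA, hA'⟩ : ∃ A : Finset (Fin n), A.card ≤ m ∧
        ∀ i : Fin (n - 1), (i : ℕ) < m → T i ⊆ A := by
      by_cases hm : (m : ℕ) = 0
      · exact ⟨∅, by simp, fun i hi => by omega⟩
      · refine ⟨T ⟨m - 1, by omega⟩, by rw [hcard]; simp only; omega, fun i hi => hT ?_⟩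
        rw [Fin.le_def]; simp only; omega
    obtain ⟨B, hB, hB'⟩ : ∃ B : Finset (Fin n), m < B.card ∧
        ∀ i : Fin (n - 1), (m : ℕ) ≤ i → B ⊆ T i := by
      by_cases hm : (m : ℕ) < n - 1
      · refine ⟨T ⟨m, hm⟩, by rw [hcard]; simp, fun i hi => hT ?_⟩
        rw [Fin.le_def]; exact hi
      · exact ⟨Finset.univ, by simp, fun i hi => by omega⟩
    obtain ⟨k, hkB, hkA⟩ := Finset.exists_mem_notMem_of_card_lt_card (hA.trans_lt hB)
    refine ⟨k, fun i => ⟨fun hk => ?_, fun hi => hB' i hi hkB⟩⟩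
    by_contra hi
    exact hkA (hA' i (by omega) hk)
  choose f hf using h
  have hw : ∀ m, familyWeight T (f m) = n - 1 - (m : ℕ) := by
    intro m
    rw [familyWeight, Nat.card_eq_fintype_card, Fintype.card_subtype]
    simp_rw [hf]
    have h1 := Finset.card_filter_add_card_filter_not (s := (Finset.univ : Finset (Fin (n - 1))))
      (fun i => (i : ℕ) < m)
    simp only [not_lt, Fin.card_filter_val_lt, Finset.card_univ, Fintype.card_fin] at h1
    omega
  have hinj : Function.Injective f := by
    intro a b hab
    have h1 := hw a
    rw [hab, hw b] at h1
    ext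
    omega
  let e := Equiv.ofBijective f (Finite.injective_iff_bijective.mp hinj)
  refine ⟨e.symm, fun k => ?_⟩
  rw [← hw (e.symm k)]
  congr 1
  exact (e.apply_symm_apply k).symm

/-- A family whose members have the same cardinalities as those of a chain `G`, and which has the
same weight as `G`, equals `G`. -/
lemma eq_of_forall_weight_eq {n : ℕ} {P : Type*} [Fintype P] (F G : P → Finset (Fin n))
    (hG : ∀ p q, G p ⊆ G q ∨ G q ⊆ G p) (hcard : ∀ p, (F p).card = (G p).card)
    (hweight : ∀ k, familyWeight F k = familyWeight G k) : F = G := by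
  funext q
  have hle : ∀ p ∈ Finset.univ, (F p ∩ G q).card ≤ (G p ∩ G q).card := by
    intro p _
    rcases hG p q with h | h
    · rw [Finset.inter_eq_left.mpr h, ← hcard]
      exact Finset.card_le_card Finset.inter_subset_left
    · rw [Finset.inter_eq_right.mpr h]
      exact Finset.card_le_card Finset.inter_subset_right
  have hsum : ∑ p, (F p ∩ G q).card = ∑ p, (G p ∩ G q).card := by
    rw [← sum_familyWeight, ← sum_familyWeight]
    exact Finset.sum_congr rfl fun k _ => hweight k
  have hq := (Finset.sum_eq_sum_iff_of_le hle).mp hsum q (Finset.mem_univ q)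
  rw [Finset.inter_self, ← hcard] at hq
  have hsub : F q ⊆ G q :=
    Finset.inter_eq_left.mp (Finset.eq_of_subset_of_card_le Finset.inter_subset_left hq.ge)
  exact Finset.eq_of_subset_of_card_le hsub (hcard q).ge

/-- Repeating a family `d` times multiplies its weight by `d`. -/
lemma familyWeight_snd {n d : ℕ} {I : Type*} (T : I → Finset (Fin n)) (k : Fin n) :
    familyWeight (fun p : Fin d × I => T p.2) k = d * familyWeight T k := by
  have e : {p : Fin d × I // k ∈ T p.2} ≃ Fin d × {i : I // k ∈ T i} :=
    { toFun := fun p => (p.1.1, ⟨p.1.2, p.2⟩)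
      invFun := fun p => ⟨(p.1, p.2.1), p.2.2⟩
      left_inv := fun _ => rfl
      right_inv := fun _ => rfl }
  rw [familyWeight, Nat.card_congr e, Nat.card_prod, Nat.card_fin, familyWeight]

/-- **Ordinary weights (Breuil–Herzig; Theorem 3.9 of the paper).**
The only weights occurring with multiplicity `1` in `L^⊗|_T` are the ordinary weights.
Combinatorially: for `n, d ≥ 1` and `μ : Fin n → ℕ`, the number of families
`(S_{j,i})_{j < d, 1 ≤ i ≤ n−1}` of subsets of `{0, …, n−1}` with `|S_{j,i}| = i` and
`μ k = #{(j,i) : k ∈ S_{j,i}}` for all `k`, equals `1` if and only if `μ` is `d` times a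
permutation of `(n−1, n−2, …, 1, 0)`. -/
theorem ordinary_weights_are_the_multiplicity_one_weights
    (n d : ℕ) (hn : 1 ≤ n) (hd : 1 ≤ d) (μ : Fin n → ℕ) :
    Nat.card {F : Fin d → Fin (n - 1) → Finset (Fin n) //
        (∀ (j : Fin d) (i : Fin (n - 1)), (F j i).card = (i : ℕ) + 1) ∧
        (∀ k : Fin n, μ k = Nat.card {p : Fin d × Fin (n - 1) // k ∈ F p.1 p.2})} = 1
      ↔ ∃ w : Equiv.Perm (Fin n), ∀ k : Fin n, μ k = d * (n - 1 - (w k : ℕ)) := by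
  rw [Nat.card_eq_one_iff_unique]
  constructor
  · rintro ⟨hsub, ⟨F, hcard, hμ⟩⟩
    let G : Fin d × Fin (n - 1) → Finset (Fin n) := fun p => F p.1 p.2
    have hchain : ∀ p q, G p ⊆ G q ∨ G q ⊆ G p := by
      intro p q
      by_contra! h
      obtain ⟨a, hap, haq⟩ := Finset.not_subset.mp h.1
      obtain ⟨b, hbq, hbp⟩ := Finset.not_subset.mp h.2
      obtain ⟨G', hne, hc, hw⟩ := exists_exchange G p q a b hap haq hbq hbp
      have heq := hsub.elim
        ⟨fun j i => G' (j, i), fun j i => (hc (j, i)).trans (hcard j i),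
          fun k => (hμ k).trans (hw k).symm⟩ ⟨F, hcard, hμ⟩
      exact hne (funext fun r => congrFun (congrFun (congrArg Subtype.val heq) r.1) r.2)
    have hmono : ∀ p q, p.2 ≤ q.2 → G p ⊆ G q := by
      intro p q hpq
      rcases hchain p q with h | h
      · exact h
      · refine (Finset.eq_of_subset_of_card_le h ?_).ge
        simp only [G, hcard]
        exact Nat.succ_le_succ hpq
    let j₀ : Fin d := ⟨0, hd⟩
    obtain ⟨w, hw⟩ := exists_perm_of_flag (F j₀) (hcard j₀)
      fun i i' hi => hmono (j₀, i) (j₀, i') hi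
    refine ⟨w, fun k => ?_⟩
    have hG : G = fun p => F j₀ p.2 := funext fun p =>
      (hmono p (j₀, p.2) le_rfl).antisymm (hmono (j₀, p.2) p le_rfl)
    calc μ k = familyWeight G k := hμ k
      _ = d * (n - 1 - (w k : ℕ)) := by rw [hG, familyWeight_snd, hw]
  · rintro ⟨w, hμ⟩
    let T : Fin (n - 1) → Finset (Fin n) := fun i => Finset.univ.filter fun k => w k ≤ (i : ℕ)
    have hT : ∀ i, (T i).card = (i : ℕ) + 1 := by
      intro i
      have h1 : (T i).map w.toEmbedding =
          Finset.univ.filter fun k : Fin n => (k : ℕ) < (i : ℕ) + 1 := by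
        ext k
        simp [T, Finset.mem_map_equiv]
      rw [← Finset.card_map w.toEmbedding, h1, Fin.card_filter_val_lt]
      omega
    have hTw : ∀ k, familyWeight T k = n - 1 - (w k : ℕ) := by
      intro k
      rw [familyWeight, Nat.card_eq_fintype_card, Fintype.card_subtype]
      have h1 := Finset.card_filter_add_card_filter_not
        (s := (Finset.univ : Finset (Fin (n - 1)))) (fun i => (i : ℕ) < w k)
      simp only [not_lt, Fin.card_filter_val_lt, Finset.card_univ, Fintype.card_fin] at h1
      simp only [T, Finset.mem_filter, Finset.mem_univ, true_and]
      omega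
    have hweight : ∀ k, μ k = familyWeight (fun p : Fin d × Fin (n - 1) => T p.2) k := by
      intro k
      rw [familyWeight_snd, hTw, hμ]
    have hmono : Monotone T := by
      intro i i' hi k hk
      simp only [T, Finset.mem_filter, Finset.mem_univ, true_and] at hk ⊢
      exact hk.trans hi
    have huniq : ∀ F : Fin d → Fin (n - 1) → Finset (Fin n),
        (∀ j i, (F j i).card = (i : ℕ) + 1) →
        (∀ k, μ k = Nat.card {p : Fin d × Fin (n - 1) // k ∈ F p.1 p.2}) →
        F = fun _ i => T i := by
      intro F hF hFμ
      have h := eq_of_forall_weight_eq (fun p : Fin d × Fin (n - 1) => F p.1 p.2)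
        (fun p => T p.2) (fun p q => (le_total p.2 q.2).imp (fun h => hmono h) fun h => hmono h)
        (fun p => (hF p.1 p.2).trans (hT p.2).symm)
        (fun k => (hFμ k).symm.trans (hweight k))
      funext j i
      exact congrFun h (j, i)
    refine ⟨⟨fun F F' => Subtype.ext ?_⟩, ⟨⟨fun _ i => T i, fun _ i => hT i, hweight⟩⟩⟩
    rw [huniq F.1 F.2.1 F.2.2, huniq F'.1 F'.2.1 F'.2.2]
end

section
/- (Transitivity step in the proof of Lemma 2.4.) Let Δ be a finite-length multiplicity-free module over a ring R, and let A, B, C be composition factors of Δ. Suppose Δ has a subquotient M₁ whose socle is isomorphic to A and whose cosocle is isomorphic to B, and a subquotient M₂ whose socle is isomorphic to B and whose cosocle is isomorphic to C. Then Δ has a subquotient M₃ whose socle is isomorphic to A and whose cosocle is isomorphic to C. -/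
/-!
In a multiplicity-free module `Δ` of finite length, a simple module `S` cannot occur both in a
submodule `Z` and in the quotient `Δ/Z` (`not_occ_both`).  By Zassenhaus' lemma a simple
subquotient of `Δ` is visible either inside `Z` or modulo `Z` (`fac_inf_or_sup`).  Together these
say that, if `S` occurs in `Δ`, there is a *least* submodule `P_S` in which `S` occurs
(`exists_least_occ`) and a *greatest* submodule `Q_S` such that `S` occurs in `Δ/Q_S`
(`exists_greatest_occ`).

If a subquotient `X/Y` has cosocle `T`, then `P_T` surjects onto `X/Y`, because its image is not
contained in the unique maximal submodule; hence every composition factor `S` of `X/Y` occurs in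
`P_T` (`occ_of_cosocle`).  So `A` occurs in `P_B` and `B` occurs in `P_C`; the latter gives
`P_B ≤ P_C`, so `A` occurs in `P_C`, and `P_C` is not contained in `Q_A`.

The subquotient `P_C / (P_C ⊓ Q_A)` is therefore nonzero.  Any maximal submodule of it has quotient
`C` by minimality of `P_C`, and two distinct ones would make `C` occur twice; so the cosocle
is `C`.  Dually, the maximality of `Q_A` shows that the socle is `A`.
-/

namespace Paper13

variable (R : Type) [Ring R]

/-- The subquotient `X/Y` of `Δ` attached to submodules `Y ≤ X ⊆ Δ`. -/
abbrev Subquot {Δ : Type} [AddCommGroup Δ] [Module R Δ] (X Y : Submodule R Δ) : Type :=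
  ↥X ⧸ (Y.comap X.subtype)

/-- The socle: the sum of all simple submodules. -/
def socle (M : Type) [AddCommGroup M] [Module R M] : Submodule R M :=
  ⨆ (N : Submodule R M) (_ : IsSimpleModule R ↥N), N

/-- The radical: the intersection of all maximal submodules.  The cosocle is the quotient
by the radical. -/
def radical (M : Type) [AddCommGroup M] [Module R M] : Submodule R M :=
  sInf {N : Submodule R M | IsCoatom N}

/-- `Δ` has finite length and is multiplicity free: it has a composition series with
pairwise non-isomorphic simple graded pieces. -/
def IsMultFree (Δ : Type) [AddCommGroup Δ] [Module R Δ] : Prop :=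
  ∃ (k : ℕ) (F : Fin (k + 1) → Submodule R Δ), F 0 = ⊥ ∧ F (Fin.last k) = ⊤ ∧
    (∀ i : Fin k, F i.castSucc ≤ F i.succ) ∧
    (∀ i : Fin k, IsSimpleModule R (Subquot R (F i.succ) (F i.castSucc))) ∧
    ∀ i j : Fin k, i ≠ j →
      IsEmpty ((Subquot R (F i.succ) (F i.castSucc)) ≃ₗ[R]
        (Subquot R (F j.succ) (F j.castSucc)))

section Helpers

variable {R} {Δ : Type} [AddCommGroup Δ] [Module R Δ]

/-! ### Occurrence of a simple module in an interval of submodules -/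

/-- The subquotient `X/Y` is isomorphic to `S`. -/
def Fac (S : Type) [AddCommGroup S] [Module R S] (Y X : Submodule R Δ) : Prop :=
  Nonempty (Subquot R X Y ≃ₗ[R] S)

/-- `S` occurs in the interval `[Y, X]`: it is isomorphic to `X'/Y'` for some
`Y ≤ Y' ≤ X' ≤ X`. -/
def Occ (S : Type) [AddCommGroup S] [Module R S] (Y X : Submodule R Δ) : Prop :=
  ∃ Y' X' : Submodule R Δ, Y ≤ Y' ∧ Y' ≤ X' ∧ X' ≤ X ∧ Fac S Y' X'

/-- Second isomorphism theorem. -/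
lemma fac_transpose {S : Type} [AddCommGroup S] [Module R S] {X Z T V : Submodule R Δ}
    (hT : X ⊔ Z = T) (hV : X ⊓ Z = V) : Fac S Z T ↔ Fac S V X := by
  subst hT hV
  have e := LinearMap.quotientInfEquivSupQuotient X Z
  exact ⟨fun ⟨f⟩ => ⟨e.trans f⟩, fun ⟨f⟩ => ⟨e.symm.trans f⟩⟩

lemma fac_covBy {S : Type} [AddCommGroup S] [Module R S] [IsSimpleModule R S]
    {Y X : Submodule R Δ} (h : Y ≤ X) (hf : Fac S Y X) : Y ⋖ X := by
  obtain ⟨e⟩ := hf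
  exact (covBy_iff_quot_is_simple h).2 (IsSimpleModule.congr e)

lemma Fac.occ {S : Type} [AddCommGroup S] [Module R S] {Y X : Submodule R Δ}
    (hf : Fac S Y X) (h : Y ≤ X) : Occ S Y X :=
  ⟨Y, X, le_rfl, h, le_rfl, hf⟩

lemma Occ.mono {S : Type} [AddCommGroup S] [Module R S] {Y X Y' X' : Submodule R Δ}
    (h : Occ S Y X) (hY : Y' ≤ Y) (hX : X ≤ X') : Occ S Y' X' := by
  obtain ⟨U, V, h1, h2, h3, h4⟩ := h
  exact ⟨U, V, hY.trans h1, h2, h3.trans hX, h4⟩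

/-- Zassenhaus: a simple subquotient `X/Y` is visible either inside `Z` or modulo `Z`. -/
lemma fac_inf_or_sup {S : Type} [AddCommGroup S] [Module R S] [IsSimpleModule R S]
    {Y X : Submodule R Δ} (h : Y ≤ X) (hf : Fac S Y X) (Z : Submodule R Δ) :
    Fac S (Y ⊓ Z) (X ⊓ Z) ∨ Fac S (Y ⊔ Z) (X ⊔ Z) := by
  rcases (fac_covBy h hf).eq_or_eq (le_sup_left : Y ≤ Y ⊔ X ⊓ Z)
    (sup_le h inf_le_left) with h1 | h1
  · right
    refine (fac_transpose (X := X) ?_ ?_).2 hf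
    · rw [← sup_assoc, sup_eq_left.2 h]
    · rw [inf_comm, sup_inf_assoc_of_le Z h, inf_comm, h1]
  · left
    refine (fac_transpose (Z := Y) ?_ ?_).1 hf
    · rw [sup_comm, h1]
    · rw [inf_right_comm, inf_eq_right.2 h]

lemma Occ.inf_or_sup {S : Type} [AddCommGroup S] [Module R S] [IsSimpleModule R S]
    {Y X : Submodule R Δ} (h : Occ S Y X) (Z : Submodule R Δ) :
    Occ S (Y ⊓ Z) (X ⊓ Z) ∨ Occ S (Y ⊔ Z) (X ⊔ Z) := by
  obtain ⟨U, V, h1, h2, h3, h4⟩ := h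
  refine (fac_inf_or_sup h2 h4 Z).imp (fun h => ?_) fun h => ?_
  · exact ⟨_, _, inf_le_inf_right _ h1, inf_le_inf_right _ h2, inf_le_inf_right _ h3, h⟩
  · exact ⟨_, _, sup_le_sup_right h1 _, sup_le_sup_right h2 _, sup_le_sup_right h3 _, h⟩

lemma Occ.split {S : Type} [AddCommGroup S] [Module R S] [IsSimpleModule R S]
    {Y X Z : Submodule R Δ} (h : Occ S Y X) (hY : Y ≤ Z) (hX : Z ≤ X) :
    Occ S Y Z ∨ Occ S Z X := by
  simpa [hY, hX] using h.inf_or_sup Z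

lemma Occ.lt {S : Type} [AddCommGroup S] [Module R S] [IsSimpleModule R S]
    {Y X : Submodule R Δ} (h : Occ S Y X) : Y < X := by
  obtain ⟨U, V, h1, h2, h3, h4⟩ := h
  exact h1.trans_lt ((fac_covBy h2 h4).lt.trans_le h3)

lemma Occ.fac {S : Type} [AddCommGroup S] [Module R S] [IsSimpleModule R S]
    {Y X : Submodule R Δ} (h : Occ S Y X) (hc : Y ⋖ X) : Fac S Y X := by
  obtain ⟨U, V, h1, h2, h3, h4⟩ := h
  have hlt := (fac_covBy h2 h4).lt
  have hU : U = Y := (hc.eq_or_eq h1 (h2.trans h3)).resolve_right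
    fun h => (hlt.trans_le h3).ne h
  have hV : V = X := (hc.eq_or_eq (h1.trans h2) h3).resolve_left
    fun h => (h1.trans_lt hlt).ne' h
  rwa [hU, hV] at h4

/-! ### Consequences of multiplicity-freeness -/

/-- Jordan–Hölder for a single factor: a simple subquotient `X/Y` of a filtered module is matched
with a step of the filtration, namely the first one where the filtration of `X` leaves `Y`. -/
lemma exists_index {k : ℕ} {F : Fin (k + 1) → Submodule R Δ} (h0 : F 0 = ⊥)
    (hl : F (Fin.last k) = ⊤) (hm : ∀ i : Fin k, F i.castSucc ≤ F i.succ)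
    (hs : ∀ i : Fin k, IsSimpleModule R (Subquot R (F i.succ) (F i.castSucc)))
    {S : Type} [AddCommGroup S] [Module R S] [IsSimpleModule R S]
    {Y X : Submodule R Δ} (h : Y ≤ X) (hf : Fac S Y X) :
    ∃ i : Fin k, X ⊓ F i.castSucc ≤ Y ∧ ¬ X ⊓ F i.succ ≤ Y ∧ F i.succ ≤ X ⊔ F i.castSucc ∧
      Fac S (F i.castSucc) (F i.succ) := by
  have hc := fac_covBy h hf
  obtain ⟨i, hi1, hi2⟩ : ∃ i : Fin k, X ⊓ F i.castSucc ≤ Y ∧ ¬ X ⊓ F i.succ ≤ Y := by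
    by_contra! hcon
    have : ∀ j, X ⊓ F j ≤ Y := fun j => Fin.induction (by simp [h0]) hcon j
    have := this (Fin.last k)
    rw [hl, inf_top_eq] at this
    exact hc.lt.not_ge this
  have hF : F i.castSucc ⋖ F i.succ := (covBy_iff_quot_is_simple (hm i)).2 (hs i)
  set U := X ⊓ F i.succ with hU
  have hUY : U ⊔ Y = X := (hc.eq_or_eq le_sup_right (sup_le inf_le_left h)).resolve_left
    fun h => hi2 (sup_eq_right.1 h)
  have hUF : U ⊔ F i.castSucc = F i.succ :=
    (hF.eq_or_eq le_sup_right (sup_le inf_le_right (hm i))).resolve_left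
      fun h => hi2 ((le_inf inf_le_left (sup_eq_right.1 h)).trans hi1)
  have f1 : Fac S (U ⊓ Y) U := (fac_transpose hUY rfl).1 hf
  have c2 : U ⊓ F i.castSucc ⋖ U := by
    have := hs i
    exact fac_covBy (S := Subquot R (F i.succ) (F i.castSucc)) inf_le_left
      ((fac_transpose hUF rfl).1 ⟨LinearEquiv.refl R _⟩)
  have heq : U ⊓ Y = U ⊓ F i.castSucc :=
    (c2.eq_or_eq (le_inf inf_le_left ((inf_le_inf_right _ inf_le_left).trans hi1))
      inf_le_left).resolve_right (fac_covBy inf_le_left f1).lt.ne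
  refine ⟨i, hi1, hi2, ?_, (fac_transpose hUF rfl).2 (heq ▸ f1)⟩
  exact hUF.ge.trans (sup_le_sup_right inf_le_left _)

/-- In a multiplicity-free module a simple module does not occur both in a submodule and in the
corresponding quotient. -/
lemma not_occ_both (hΔ : IsMultFree R Δ) {S : Type} [AddCommGroup S] [Module R S]
    [IsSimpleModule R S] {Z : Submodule R Δ} (h1 : Occ S ⊥ Z) (h2 : Occ S Z ⊤) : False := by
  obtain ⟨k, F, h0, hl, hm, hs, hd⟩ := hΔ
  obtain ⟨U, V, -, hUV, hVZ, f⟩ := h1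
  obtain ⟨U', V', hZU, hUV', -, f'⟩ := h2
  obtain ⟨i, -, -, hi, ⟨e⟩⟩ := exists_index h0 hl hm hs hUV f
  obtain ⟨j, hj1, hj2, -, ⟨e₂⟩⟩ := exists_index h0 hl hm hs hUV' f'
  obtain rfl : i = j := by
    by_contra hij
    exact (hd i j hij).false (e.trans e₂.symm)
  -- `F i.succ ≤ U' ⊔ F i.castSucc`, so by modularity `V' ⊓ F i.succ ≤ U' ⊔ V' ⊓ F i.castSucc = U'`.
  apply hj2
  calc V' ⊓ F i.succ ≤ V' ⊓ (U' ⊔ F i.castSucc) :=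
        inf_le_inf_left _ (hi.trans (sup_le_sup_right (hVZ.trans hZU) _))
    _ = U' ⊔ V' ⊓ F i.castSucc := by
        rw [inf_comm, sup_inf_assoc_of_le _ hUV', inf_comm]
    _ ≤ U' := sup_le le_rfl hj1

lemma IsMultFree.isFiniteLength (hΔ : IsMultFree R Δ) : IsFiniteLength R Δ := by
  obtain ⟨k, F, h0, hl, hm, hs, -⟩ := hΔ
  have : ∀ j, IsFiniteLength R (F j) := by
    intro j
    induction j using Fin.induction with
    | zero =>
      rw [h0]
      exact .of_subsingleton
    | succ i ih =>
      have := hs i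
      exact .of_simple_quotient (N := (F i.castSucc).comap (F i.succ).subtype)
        ((Submodule.comapSubtypeEquivOfLe (hm i)).symm.isFiniteLength ih)
  have h := this (Fin.last k)
  rw [hl] at h
  exact Submodule.topEquiv.isFiniteLength h

lemma exists_least_occ (hΔ : IsMultFree R Δ) [IsArtinian R Δ] {S : Type} [AddCommGroup S]
    [Module R S] [IsSimpleModule R S] (h : Occ S (⊥ : Submodule R Δ) ⊤) :
    ∃ P : Submodule R Δ, Occ S ⊥ P ∧ ∀ X, Occ S ⊥ X → P ≤ X := by
  obtain ⟨P, hP, hmin⟩ := WellFounded.has_min (wellFounded_lt (α := Submodule R Δ))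
    {X | Occ S ⊥ X} ⟨⊤, h⟩
  refine ⟨P, hP, fun X hX => ?_⟩
  by_contra hle
  rcases Occ.inf_or_sup hP X with h1 | h1
  · exact hmin (P ⊓ X) (h1.mono bot_le le_rfl) (inf_lt_left.2 hle)
  · exact not_occ_both hΔ hX (h1.mono le_sup_right le_top)

lemma exists_greatest_occ (hΔ : IsMultFree R Δ) [IsNoetherian R Δ] {S : Type} [AddCommGroup S]
    [Module R S] [IsSimpleModule R S] (h : Occ S (⊥ : Submodule R Δ) ⊤) :
    ∃ Q : Submodule R Δ, Occ S Q ⊤ ∧ ∀ Y, Occ S Y ⊤ → Y ≤ Q := by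
  obtain ⟨Q, hQ, hmax⟩ := WellFounded.has_min (wellFounded_gt (α := Submodule R Δ))
    {Y | Occ S Y ⊤} ⟨⊥, h⟩
  refine ⟨Q, hQ, fun Y hY => ?_⟩
  by_contra hle
  rcases Occ.inf_or_sup hQ Y with h1 | h1
  · exact not_occ_both hΔ (h1.mono bot_le inf_le_right) hY
  · exact hmax (Q ⊔ Y) (h1.mono le_rfl le_top) (left_lt_sup.2 hle)

/-! ### Submodules of a subquotient -/

/-- The submodule of `Δ` between `Y` and `X` corresponding to a submodule of `X/Y`
(for `Y ≤ X`). -/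
def lift {X Y : Submodule R Δ} (N : Submodule R (Subquot R X Y)) : Submodule R Δ :=
  (N.comap (Submodule.mkQ _)).map X.subtype

lemma mem_lift {X Y : Submodule R Δ} {N : Submodule R (Subquot R X Y)} {x : Δ} :
    x ∈ lift N ↔ ∃ h : x ∈ X, Submodule.Quotient.mk ⟨x, h⟩ ∈ N := by
  simp [lift]

lemma lift_le {X Y : Submodule R Δ} (N : Submodule R (Subquot R X Y)) : lift N ≤ X :=
  Submodule.map_subtype_le _ _

lemma le_lift {X Y : Submodule R Δ} (h : Y ≤ X) (N : Submodule R (Subquot R X Y)) :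
    Y ≤ lift N := by
  intro y hy
  refine mem_lift.2 ⟨h hy, ?_⟩
  rw [(Submodule.Quotient.mk_eq_zero _).2 (by simpa using hy)]
  exact N.zero_mem

lemma lift_le_lift {X Y : Submodule R Δ} {N N' : Submodule R (Subquot R X Y)} :
    lift N ≤ lift N' ↔ N ≤ N' := by
  rw [lift, lift, Submodule.map_le_map_iff_of_injective X.subtype_injective,
    Submodule.comap_le_comap_iff_of_surjective (Submodule.mkQ_surjective _)]

lemma lift_injective {X Y : Submodule R Δ} :
    Function.Injective (lift : Submodule R (Subquot R X Y) → Submodule R Δ) := fun _ _ h =>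
  le_antisymm (lift_le_lift.1 h.le) (lift_le_lift.1 h.ge)

lemma lift_quot_equiv {X Y : Submodule R Δ} (N : Submodule R (Subquot R X Y)) :
    Nonempty (Subquot R X (lift N) ≃ₗ[R] (Subquot R X Y ⧸ N)) := by
  let f : ↥X →ₗ[R] (Subquot R X Y ⧸ N) := N.mkQ ∘ₗ Submodule.mkQ _
  have hf : Function.Surjective f :=
    (Submodule.mkQ_surjective _).comp (Submodule.mkQ_surjective _)
  have hk : (lift N).comap X.subtype = LinearMap.ker f := by
    rw [lift, Submodule.comap_map_eq_of_injective X.subtype_injective, LinearMap.ker_comp,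
      Submodule.ker_mkQ]
  exact ⟨(Submodule.quotEquivOfEq _ _ hk).trans (f.quotKerEquivOfSurjective hf)⟩

lemma lift_sub_equiv {X Y : Submodule R Δ} (N : Submodule R (Subquot R X Y)) :
    Nonempty (Subquot R (lift N) Y ≃ₗ[R] N) := by
  let f : ↥(lift N) →ₗ[R] N :=
    (Submodule.mkQ _ ∘ₗ Submodule.inclusion (lift_le N)).codRestrict N
      fun x => (mem_lift.1 x.2).2
  have hf : Function.Surjective f := by
    rintro ⟨y, hy⟩
    obtain ⟨x, rfl⟩ := Submodule.Quotient.mk_surjective _ y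
    exact ⟨⟨x, mem_lift.2 ⟨x.2, hy⟩⟩, rfl⟩
  have hk : Y.comap (lift N).subtype = LinearMap.ker f := by
    ext x
    rw [LinearMap.mem_ker, ← Subtype.coe_inj]
    exact (Submodule.Quotient.mk_eq_zero (Y.comap X.subtype)
      (x := Submodule.inclusion (lift_le N) x)).symm
  exact ⟨(Submodule.quotEquivOfEq _ _ hk).trans (f.quotKerEquivOfSurjective hf)⟩

/-! ### Socles and cosocles -/

/-- If `X/Y` has simple cosocle `T`, then every composition factor of `X/Y` already occurs in the
least submodule `P` containing `T`, since `P` surjects onto `X/Y`. -/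
lemma occ_of_cosocle (hΔ : IsMultFree R Δ) [IsNoetherian R Δ]
    {S T : Type} [AddCommGroup S] [Module R S] [IsSimpleModule R S]
    [AddCommGroup T] [Module R T] [IsSimpleModule R T]
    {X Y P : Submodule R Δ}
    (hcos : Nonempty ((Subquot R X Y ⧸ radical R (Subquot R X Y)) ≃ₗ[R] T))
    (hS : Occ S Y X) (hP : Occ T ⊥ P) (hmin : ∀ Z, Occ T ⊥ Z → P ≤ Z) : Occ S ⊥ P := by
  obtain ⟨e⟩ := hcos
  set J := radical R (Subquot R X Y) with hJ
  have hTJ : Fac T (lift J) X := by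
    obtain ⟨e'⟩ := lift_quot_equiv J
    exact ⟨e'.trans e⟩
  have hPX : P ≤ X := hmin X ((hTJ.occ (lift_le J)).mono bot_le le_rfl)
  have hPJ : ¬ P ≤ lift J := fun hle => not_occ_both hΔ (hP.mono le_rfl hle)
    ((hTJ.occ (lift_le J)).mono le_rfl le_top)
  let N : Submodule R (Subquot R X Y) := (P.comap X.subtype).map (Submodule.mkQ _)
  have hJc : IsCoatom J := isSimpleModule_iff_isCoatom.1 (IsSimpleModule.congr e)
  have hN : N = ⊤ := by
    by_contra hne
    obtain ⟨K, hK, hNK⟩ := (eq_top_or_exists_le_coatom N).resolve_left hne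
    have hJK : J ≤ K := sInf_le hK
    have hKJ : K = J := ((hJc.le_iff).1 hJK).resolve_left hK.1
    refine hPJ fun p hp => mem_lift.2 ⟨hPX hp, ?_⟩
    exact (hNK.trans hKJ.le) (Submodule.mem_map_of_mem (f := Submodule.mkQ _) (by simpa using hp))
  have hXP : X ≤ Y ⊔ P := by
    intro x hx
    have : Submodule.Quotient.mk ⟨x, hx⟩ ∈ N := hN ▸ Submodule.mem_top
    obtain ⟨p, hp, hpx⟩ := Submodule.mem_map.1 this
    have hd := (Submodule.Quotient.eq _).1 hpx.symm
    exact Submodule.mem_sup.2 ⟨x - p, by simpa using hd, p, by simpa using hp, by simp⟩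
  rcases hS.inf_or_sup P with h1 | h1
  · exact h1.mono bot_le inf_le_right
  · exact absurd h1.lt (sup_le hXP le_sup_right).not_gt

/-- A module with a simple submodule `≅ A` and no other simple submodule has socle `≅ A`. -/
lemma socle_equiv {M A : Type} [AddCommGroup M] [Module R M] [AddCommGroup A] [Module R A]
    {N : Submodule R M} [IsSimpleModule R N] (e : Nonempty (N ≃ₗ[R] A))
    (hu : ∀ N' : Submodule R M, IsSimpleModule R N' → N' = N) :
    Nonempty (socle R M ≃ₗ[R] A) := by
  have : socle R M = N :=
    le_antisymm (iSup₂_le fun N' h => (hu N' h).le) (le_iSup₂_of_le N ‹_› le_rfl)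
  rwa [this]

/-- A module with a unique maximal submodule, of quotient `C`, has cosocle `≅ C`. -/
lemma cosocle_equiv {M C : Type} [AddCommGroup M] [Module R M] [AddCommGroup C] [Module R C]
    {N : Submodule R M} (hN : IsCoatom N) (e : Nonempty ((M ⧸ N) ≃ₗ[R] C))
    (hu : ∀ N' : Submodule R M, IsCoatom N' → N' = N) :
    Nonempty ((M ⧸ radical R M) ≃ₗ[R] C) := by
  have : radical R M = N :=
    le_antisymm (sInf_le hN) (le_sInf fun N' h => (hu N' h).ge)
  rwa [this]

/-- If `Q` is greatest with `A` occurring in `Δ/Q`, any nonzero quotient `P/(P ⊓ Q)` has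
socle `A`. -/
lemma socle_inf (hΔ : IsMultFree R Δ) [IsArtinian R Δ] {A : Type} [AddCommGroup A] [Module R A]
    [IsSimpleModule R A] {P Q : Submodule R Δ} (hQ : Occ A Q ⊤)
    (hmax : ∀ Y, Occ A Y ⊤ → Y ≤ Q) (hPQ : ¬ P ≤ Q) :
    Nonempty (socle R (Subquot R P (P ⊓ Q)) ≃ₗ[R] A) := by
  have key : ∀ N : Submodule R (Subquot R P (P ⊓ Q)), IsSimpleModule R N →
      Fac A (P ⊓ Q) (lift N) := by
    intro N hN
    have hle : P ⊓ Q ≤ lift N := le_lift inf_le_left N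
    have hc : P ⊓ Q ⋖ lift N := fac_covBy hle (lift_sub_equiv N)
    have hWQ : ¬ lift N ≤ Q := fun h => hc.lt.not_ge (le_inf (lift_le N) h)
    have hinf : lift N ⊓ Q = P ⊓ Q :=
      le_antisymm (inf_le_inf_right _ (lift_le N)) (le_inf hle inf_le_right)
    have hQW : Q ⋖ lift N ⊔ Q :=
      fac_covBy (S := N) le_sup_right ((fac_transpose rfl hinf).2 (lift_sub_equiv N))
    have hocc : Occ A Q (lift N ⊔ Q) := (hQ.split le_sup_right le_top).resolve_right
      fun h => hWQ (le_sup_left.trans (hmax _ h))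
    exact (fac_transpose rfl hinf).1 (hocc.fac hQW)
  have : Nontrivial (Subquot R P (P ⊓ Q)) := by
    refine Submodule.Quotient.nontrivial_iff.2 fun h => hPQ ?_
    exact (Submodule.comap_subtype_eq_top.1 h).trans inf_le_right
  obtain ⟨N, hN⟩ := IsAtomic.exists_atom (Submodule R (Subquot R P (P ⊓ Q)))
  have hNs : IsSimpleModule R N := isSimpleModule_iff_isAtom.2 hN
  obtain ⟨e⟩ := key N hNs
  obtain ⟨e'⟩ := lift_sub_equiv N
  refine socle_equiv (N := N) ⟨e'.symm.trans e⟩ fun N' hN' => ?_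
  by_contra hne
  -- Otherwise `A` occurs both in `lift N` and, via `lift N' ⊔ lift N`, modulo `lift N`.
  have f := key N' hN'
  have hle := le_lift (inf_le_left : P ⊓ Q ≤ P) N
  have hle' := le_lift (inf_le_left : P ⊓ Q ≤ P) N'
  have hc : P ⊓ Q ⋖ lift N := fac_covBy hle (key N hNs)
  have hc' : P ⊓ Q ⋖ lift N' := fac_covBy hle' f
  have hinf : lift N' ⊓ lift N = P ⊓ Q := by
    refine (hc'.eq_or_eq (le_inf hle' hle) inf_le_left).resolve_right fun h => ?_
    exact (hc.eq_or_eq hle' (inf_eq_left.1 h)).elim hc'.lt.ne' fun h => hne (lift_injective h)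
  refine not_occ_both hΔ (((key N hNs).occ hle).mono bot_le le_rfl)
    (Occ.mono (Fac.occ ((fac_transpose rfl hinf).2 f) le_sup_right) le_rfl le_top)

/-- If `P` is the least submodule in which `C` occurs, any nonzero quotient `P/Y` has
cosocle `C`. -/
lemma cosocle_least (hΔ : IsMultFree R Δ) [IsNoetherian R Δ] {C : Type} [AddCommGroup C]
    [Module R C] [IsSimpleModule R C] {P Y : Submodule R Δ} (hP : Occ C ⊥ P)
    (hmin : ∀ X, Occ C ⊥ X → P ≤ X) (hPY : ¬ P ≤ Y) :
    Nonempty ((Subquot R P Y ⧸ radical R (Subquot R P Y)) ≃ₗ[R] C) := by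
  have cov : ∀ N : Submodule R (Subquot R P Y), IsCoatom N → lift N ⋖ P := by
    intro N hN
    have hs : IsSimpleModule R (Subquot R P Y ⧸ N) := isSimpleModule_iff_isCoatom.2 hN
    exact fac_covBy (lift_le N) (lift_quot_equiv N)
  have key : ∀ N : Submodule R (Subquot R P Y), IsCoatom N → Fac C (lift N) P := by
    intro N hN
    exact ((hP.split bot_le (lift_le N)).resolve_left
      fun h => (cov N hN).lt.not_ge (hmin _ h)).fac (cov N hN)
  have : Nontrivial (Subquot R P Y) :=
    Submodule.Quotient.nontrivial_iff.2 fun h => hPY (Submodule.comap_subtype_eq_top.1 h)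
  obtain ⟨N, hN⟩ := IsCoatomic.exists_coatom (Submodule R (Subquot R P Y))
  obtain ⟨e⟩ := key N hN
  obtain ⟨e'⟩ := lift_quot_equiv N
  refine cosocle_equiv hN ⟨e'.symm.trans e⟩ fun N' hN' => ?_
  by_contra hne
  have hsup : lift N' ⊔ lift N = P := by
    refine ((cov N hN).eq_or_eq le_sup_right
      (sup_le (lift_le _) (lift_le _))).resolve_left fun h => ?_
    exact ((cov N' hN').eq_or_eq (sup_eq_right.1 h) (lift_le _)).elim
      (fun h => hne (lift_injective h.symm)) (cov N hN).lt.ne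
  -- Otherwise `C = P / lift N` also occurs in `lift N'`, and `C = P / lift N'`.
  refine not_occ_both hΔ (Z := lift N')
    (Occ.mono (Fac.occ ((fac_transpose hsup rfl).1 (key N hN)) inf_le_left) bot_le le_rfl)
    (Occ.mono (Fac.occ (key N' hN') (lift_le _)) le_rfl le_top)

end Helpers

/-- **Transitivity step in the proof of Lemma 2.4.** Let `Δ` be a finite-length
multiplicity-free module and `A, B, C` composition factors of `Δ`.  If `Δ` has a subquotient
with socle `≅ A` and cosocle `≅ B`, and a subquotient with socle `≅ B` and cosocle `≅ C`,
then `Δ` has a subquotient with socle `≅ A` and cosocle `≅ C`. -/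
theorem socle_cosocle_transitivity
    (Δ : Type) [AddCommGroup Δ] [Module R Δ] (hΔ : IsMultFree R Δ)
    (A : Type) [AddCommGroup A] [Module R A] (hA : IsSimpleModule R A)
    (B : Type) [AddCommGroup B] [Module R B] (hB : IsSimpleModule R B)
    (C : Type) [AddCommGroup C] [Module R C] (hC : IsSimpleModule R C)
    (hAfac : ∃ X Y : Submodule R Δ, Y ≤ X ∧ Nonempty ((Subquot R X Y) ≃ₗ[R] A))
    (hBfac : ∃ X Y : Submodule R Δ, Y ≤ X ∧ Nonempty ((Subquot R X Y) ≃ₗ[R] B))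
    (hCfac : ∃ X Y : Submodule R Δ, Y ≤ X ∧ Nonempty ((Subquot R X Y) ≃ₗ[R] C))
    (X₁ Y₁ : Submodule R Δ) (h₁ : Y₁ ≤ X₁)
    (hsoc₁ : Nonempty (↥(socle R (Subquot R X₁ Y₁)) ≃ₗ[R] A))
    (hcos₁ : Nonempty ((Subquot R X₁ Y₁ ⧸ radical R (Subquot R X₁ Y₁)) ≃ₗ[R] B))
    (X₂ Y₂ : Submodule R Δ) (h₂ : Y₂ ≤ X₂)
    (hsoc₂ : Nonempty (↥(socle R (Subquot R X₂ Y₂)) ≃ₗ[R] B))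
    (hcos₂ : Nonempty ((Subquot R X₂ Y₂ ⧸ radical R (Subquot R X₂ Y₂)) ≃ₗ[R] C)) :
    ∃ X₃ Y₃ : Submodule R Δ, Y₃ ≤ X₃ ∧
      Nonempty (↥(socle R (Subquot R X₃ Y₃)) ≃ₗ[R] A) ∧
      Nonempty ((Subquot R X₃ Y₃ ⧸ radical R (Subquot R X₃ Y₃)) ≃ₗ[R] C) := by
  obtain ⟨hnoeth, hart⟩ := isFiniteLength_iff_isNoetherian_isArtinian.1 hΔ.isFiniteLength
  have occ_soc : ∀ {S : Type} [AddCommGroup S] [Module R S] {X Y : Submodule R Δ}, Y ≤ X →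
      Nonempty (↥(socle R (Subquot R X Y)) ≃ₗ[R] S) → Occ S Y X := by
    rintro S _ _ X Y h ⟨e⟩
    obtain ⟨e'⟩ := lift_sub_equiv (socle R (Subquot R X Y))
    exact ⟨Y, _, le_rfl, le_lift h _, lift_le _, ⟨e'.trans e⟩⟩
  have occ_top : ∀ {S : Type} [AddCommGroup S] [Module R S],
      (∃ X Y : Submodule R Δ, Y ≤ X ∧ Nonempty (Subquot R X Y ≃ₗ[R] S)) →
        Occ S (⊥ : Submodule R Δ) ⊤ := by
    rintro S _ _ ⟨X, Y, h, e⟩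
    exact ⟨Y, X, bot_le, h, le_top, e⟩
  obtain ⟨PB, hPB, hPBmin⟩ := exists_least_occ hΔ (occ_top hBfac)
  obtain ⟨PC, hPC, hPCmin⟩ := exists_least_occ hΔ (occ_top hCfac)
  obtain ⟨Q, hQ, hQmax⟩ := exists_greatest_occ hΔ (occ_top hAfac)
  have hAB : Occ A ⊥ PB := occ_of_cosocle hΔ hcos₁ (occ_soc h₁ hsoc₁) hPB hPBmin
  have hBC : Occ B ⊥ PC := occ_of_cosocle hΔ hcos₂ (occ_soc h₂ hsoc₂) hPC hPCmin
  have hPQ : ¬ PC ≤ Q := fun h =>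
    not_occ_both hΔ (hAB.mono le_rfl ((hPBmin _ hBC).trans h)) hQ
  exact ⟨PC, PC ⊓ Q, inf_le_left, socle_inf hΔ hQ hQmax hPQ,
    cosocle_least hΔ hPC hPCmin fun h => hPQ (h.trans inf_le_right)⟩

end Paper13
end

section
/- (Module-theoretic content of Lemma 2.6(1).) Let Δ be a finite-length multiplicity-free module over a ring R with a filtration 0 = F₀ ⊊ F₁ ⊊ … ⊊ F_k = Δ whose graded pieces Δ_i := F_i/F_{i−1} are simple (hence pairwise non-isomorphic). Let C be the set of ordered pairs (i, j) with i ≠ j such that Δ admits a subquotient with socle isomorphic to Δ_i and cosocle isomorphic to Δ_j. Then for a permutation u of {1, …, k}, Δ admits a filtration 0 = F'₀ ⊊ F'₁ ⊊ … ⊊ F'_k = Δ with F'_i/F'_{i−1} ≅ Δ_{u^{-1}(i)} for all i if and only if u(i) < u(j) for every (i, j) ∈ C. -/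
/-!
Because the constituents of `Δ` are pairwise non-isomorphic, a submodule of `Δ` is determined by
its set of constituents: sending a submodule to that set embeds the submodule lattice in the
lattice of subsets of `Fin k` (`occ_inf`, `occ_sup`, `le_of_occ`). The set of constituents is read
off the filtration `F` itself (`Occ`), and all computations rest on a one-step form of the
Jordan–Hölder theorem (`jordan_holder_step`).

Consequently the possible constituent sets are the down-sets of the order in which `i` lies below
`j` when every submodule with constituent `j` has constituent `i`. This order is the one given by
the socle-cosocle pairs. If `X / Y` has socle `Δ_i` and cosocle `Δ_j` and `M` has constituent
`j`, then `X ∩ M` is not contained in `Y`, so its image in `X / Y` contains the socle and `M` has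
constituent `i` (`occ_of_subquot`). Conversely, the smallest submodule with constituent `j`,
divided by its largest submodule without constituent `i`, has socle `Δ_i` and cosocle `Δ_j`
(`exists_subquot`).

A filtration with the order of constituents prescribed by `u` is then the same as a realization
of each initial segment `{l | u l < a}` as a constituent set, which is possible exactly when all
these segments are down-sets.
-/


namespace Paper14

variable (R : Type) [Ring R]

/-- The subquotient `X/Y` of `Δ` attached to submodules `Y ≤ X ⊆ Δ`. -/
abbrev Subquot {Δ : Type} [AddCommGroup Δ] [Module R Δ] (X Y : Submodule R Δ) : Type :=
  ↥X ⧸ (Y.comap X.subtype)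

/-- The socle: the sum of all simple submodules. -/
def socle (M : Type) [AddCommGroup M] [Module R M] : Submodule R M :=
  ⨆ (N : Submodule R M) (_ : IsSimpleModule R ↥N), N

/-- The radical: the intersection of all maximal submodules.  The cosocle is the quotient
by the radical. -/
def radical (M : Type) [AddCommGroup M] [Module R M] : Submodule R M :=
  sInf {N : Submodule R M | IsCoatom N}

variable {R}

/-- The `i`-th graded piece `F i.succ / F i.castSucc` of a filtration. -/
abbrev gr {Δ : Type} [AddCommGroup Δ] [Module R Δ] {k : ℕ}
    (F : Fin (k + 1) → Submodule R Δ) (i : Fin k) : Type :=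
  Subquot R (F i.succ) (F i.castSucc)

/-! ### Subquotients and their submodules -/

section Subquotients

variable {Δ : Type} [AddCommGroup Δ] [Module R Δ]

/-- The second isomorphism theorem for subquotients: the inclusion `A ≤ A'` induces
`A / B ≃ A' / B'` as soon as `A' = A + B'` and `B = A ∩ B'`. -/
lemma subquot_equiv {A B A' B' : Submodule R Δ} (h1 : A ≤ A') (h2 : A' ≤ A ⊔ B')
    (h3 : A ⊓ B' ≤ B) (h4 : B ≤ B') : Nonempty (Subquot R A B ≃ₗ[R] Subquot R A' B') := by
  let f : ↥A →ₗ[R] Subquot R A' B' :=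
    (B'.comap A'.subtype).mkQ ∘ₗ Submodule.inclusion h1
  have hker : B.comap A.subtype = LinearMap.ker f := by
    ext x
    simp only [f, Submodule.mem_comap, LinearMap.mem_ker, LinearMap.comp_apply,
      Submodule.mkQ_apply, Submodule.Quotient.mk_eq_zero, Submodule.subtype_apply,
      Submodule.coe_inclusion]
    exact ⟨fun h => h4 h, fun h => h3 ⟨x.2, h⟩⟩
  have hsurj : Function.Surjective f := by
    intro y
    obtain ⟨⟨z, hz⟩, rfl⟩ := Submodule.mkQ_surjective _ y
    obtain ⟨a, ha, b, hb, rfl⟩ := Submodule.mem_sup.1 (h2 hz)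
    refine ⟨⟨a, ha⟩, ?_⟩
    simp only [f, LinearMap.comp_apply, Submodule.mkQ_apply]
    rw [Submodule.Quotient.eq]
    simpa using hb
  exact ⟨(Submodule.quotEquivOfEq _ _ hker).trans (f.quotKerEquivOfSurjective hsurj)⟩

/-- The preimage in `Δ` of a submodule of the subquotient `X / Y`. -/
def pull {X Y : Submodule R Δ} (N : Submodule R (Subquot R X Y)) : Submodule R Δ :=
  (N.comap (Y.comap X.subtype).mkQ).map X.subtype

lemma mem_pull {X Y : Submodule R Δ} {N : Submodule R (Subquot R X Y)} {x : Δ} :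
    x ∈ pull N ↔ ∃ h : x ∈ X, (Y.comap X.subtype).mkQ ⟨x, h⟩ ∈ N := by
  simp [pull]

lemma pull_le {X Y : Submodule R Δ} (N : Submodule R (Subquot R X Y)) : pull N ≤ X :=
  fun _ hx => (mem_pull.1 hx).1

lemma le_pull {X Y : Submodule R Δ} (hYX : Y ≤ X) (N : Submodule R (Subquot R X Y)) :
    Y ≤ pull N := by
  intro x hx
  refine mem_pull.2 ⟨hYX hx, ?_⟩
  have : (Y.comap X.subtype).mkQ ⟨x, hYX hx⟩ = 0 := by
    rw [Submodule.mkQ_apply, Submodule.Quotient.mk_eq_zero]; exact hx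
  rw [this]; exact N.zero_mem

lemma pull_le_pull {X Y : Submodule R Δ} {N N' : Submodule R (Subquot R X Y)} :
    pull N ≤ pull N' ↔ N ≤ N' := by
  constructor
  · intro h y hy
    obtain ⟨⟨z, hz⟩, rfl⟩ := Submodule.mkQ_surjective _ y
    exact (mem_pull.1 (h (mem_pull.2 ⟨hz, hy⟩))).2
  · intro h x hx
    obtain ⟨h1, h2⟩ := mem_pull.1 hx
    exact mem_pull.2 ⟨h1, h h2⟩

lemma pull_bot {X Y : Submodule R Δ} (hYX : Y ≤ X) :
    pull (⊥ : Submodule R (Subquot R X Y)) = Y := by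
  refine le_antisymm (fun x hx => ?_) (le_pull hYX _)
  obtain ⟨h1, h2⟩ := mem_pull.1 hx
  rw [Submodule.mem_bot, Submodule.mkQ_apply, Submodule.Quotient.mk_eq_zero] at h2
  exact h2

lemma pull_top {X Y : Submodule R Δ} : pull (⊤ : Submodule R (Subquot R X Y)) = X :=
  le_antisymm (pull_le _) fun _ hx => mem_pull.2 ⟨hx, trivial⟩

lemma exists_pull_eq {X Y A : Submodule R Δ} (hYA : Y ≤ A) (hAX : A ≤ X) :
    ∃ N : Submodule R (Subquot R X Y), pull N = A := by
  refine ⟨(A.comap X.subtype).map (Y.comap X.subtype).mkQ, ?_⟩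
  ext x
  rw [mem_pull]
  constructor
  · rintro ⟨hx, a, ha, hax⟩
    rw [Submodule.mkQ_apply, Submodule.mkQ_apply, Submodule.Quotient.eq] at hax
    have h1 : (a : Δ) - x ∈ Y := hax
    have h2 : (a : Δ) ∈ A := ha
    simpa using A.sub_mem h2 (hYA h1)
  · intro hx
    exact ⟨hAX hx, ⟨x, hAX hx⟩, hx, rfl⟩

lemma pull_equiv {X Y : Submodule R Δ} (N : Submodule R (Subquot R X Y)) :
    Nonempty (Subquot R (pull N) Y ≃ₗ[R] ↥N) := by
  let f : ↥(pull N) →ₗ[R] ↥N :=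
    ((Y.comap X.subtype).mkQ ∘ₗ Submodule.inclusion (pull_le N)).codRestrict N
      (fun x => (mem_pull.1 x.2).2)
  have hker : Y.comap (pull N).subtype = LinearMap.ker f := by
    ext x
    rw [LinearMap.mem_ker, ← Submodule.coe_eq_zero]
    change _ ↔ (Y.comap X.subtype).mkQ ⟨(x : Δ), pull_le N x.2⟩ = 0
    rw [Submodule.mkQ_apply, Submodule.Quotient.mk_eq_zero]
    rfl
  have hsurj : Function.Surjective f := by
    rintro ⟨y, hy⟩
    obtain ⟨⟨z, hz⟩, rfl⟩ := Submodule.mkQ_surjective _ y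
    exact ⟨⟨z, mem_pull.2 ⟨hz, hy⟩⟩, rfl⟩
  exact ⟨(Submodule.quotEquivOfEq _ _ hker).trans (f.quotKerEquivOfSurjective hsurj)⟩

lemma quot_pull_equiv {X Y : Submodule R Δ} (N : Submodule R (Subquot R X Y)) :
    Nonempty (Subquot R X (pull N) ≃ₗ[R] (Subquot R X Y ⧸ N)) := by
  let f : ↥X →ₗ[R] (Subquot R X Y ⧸ N) := N.mkQ ∘ₗ (Y.comap X.subtype).mkQ
  have hker : (pull N).comap X.subtype = LinearMap.ker f := by
    ext x
    rw [LinearMap.mem_ker, Submodule.mem_comap, mem_pull]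
    simp only [f, LinearMap.comp_apply]
    rw [Submodule.mkQ_apply N, Submodule.Quotient.mk_eq_zero]
    exact ⟨fun h => h.2, fun h => ⟨x.2, h⟩⟩
  have hsurj : Function.Surjective f :=
    (Submodule.mkQ_surjective _).comp (Submodule.mkQ_surjective _)
  exact ⟨(Submodule.quotEquivOfEq _ _ hker).trans (f.quotKerEquivOfSurjective hsurj)⟩

lemma le_socle {M : Type} [AddCommGroup M] [Module R M] {N : Submodule R M}
    (hN : IsSimpleModule R ↥N) : N ≤ socle R M :=
  le_iSup₂_of_le N hN le_rfl

/-- If `W / Y` is simple and contained in every nonzero submodule of `X / Y`, then it is the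
socle of `X / Y`. -/
lemma socle_equiv {X Y W : Submodule R Δ} (hYW : Y ≤ W) (hWX : W ≤ X)
    (hs : IsSimpleModule R (Subquot R W Y))
    (hmin : ∀ A, Y ≤ A → A ≤ X → ¬ A ≤ Y → W ≤ A) :
    Nonempty (↥(socle R (Subquot R X Y)) ≃ₗ[R] Subquot R W Y) := by
  obtain ⟨N, rfl⟩ := exists_pull_eq hYW hWX
  obtain ⟨e⟩ := pull_equiv N
  have hN : IsSimpleModule R ↥N := (LinearEquiv.isSimpleModule_iff e).1 hs
  have : socle R (Subquot R X Y) = N := by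
    refine le_antisymm (iSup₂_le fun N' hN' => ?_) (le_socle hN)
    have hYX := hYW.trans hWX
    have h1 : N ≤ N' := by
      rw [← pull_le_pull]
      refine hmin _ (le_pull hYX _) (pull_le _) fun h => ?_
      exact (isSimpleModule_iff_isAtom.1 hN').1
        (le_bot_iff.1 (pull_le_pull.1 (h.trans (pull_bot hYX).ge)))
    rcases (isSimpleModule_iff_isAtom.1 hN').le_iff.1 h1 with h | h
    · exact absurd h (isSimpleModule_iff_isAtom.1 hN).1
    · exact h.ge
  rw [this]
  exact ⟨e.symm⟩

/-- If `Z / Y` is a proper submodule of `X / Y` containing every proper submodule, then it is the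
radical of `X / Y`. -/
lemma cosocle_equiv {X Y Z : Submodule R Δ} (hYZ : Y ≤ Z) (hZX : Z ≤ X) (hne : ¬ X ≤ Z)
    (hmax : ∀ A, Y ≤ A → A ≤ X → ¬ X ≤ A → A ≤ Z) :
    Nonempty ((Subquot R X Y ⧸ radical R (Subquot R X Y)) ≃ₗ[R] Subquot R X Z) := by
  obtain ⟨N, rfl⟩ := exists_pull_eq hYZ hZX
  obtain ⟨e⟩ := quot_pull_equiv N
  have key : ∀ N' : Submodule R (Subquot R X Y), N' ≠ ⊤ → N' ≤ N := by
    intro N' h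
    rw [← pull_le_pull]
    refine hmax _ (le_pull (hYZ.trans hZX) _) (pull_le _) fun h' => h ?_
    rw [← top_le_iff, ← pull_le_pull, pull_top]
    exact h'
  have hN : IsCoatom N := by
    refine ⟨fun h => hne ?_, fun N' hlt => ?_⟩
    · rw [h, pull_top]
    · by_contra h
      exact hlt.not_ge (key _ h)
  have : radical R (Subquot R X Y) = N :=
    le_antisymm (sInf_le hN) (le_sInf fun N' hN' =>
      ((hN'.le_iff_eq hN.1).1 (key N' hN'.1)).le)
  rw [this]
  exact ⟨e.symm⟩

end Subquotients

/-! ### The constituents of a submodule -/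

section Constituents

variable {Δ : Type} [AddCommGroup Δ] [Module R Δ] {k : ℕ} {F : Fin (k + 1) → Submodule R Δ}

/-- A filtration from `⊥` to `⊤` with simple, pairwise non-isomorphic graded pieces. -/
structure IsMF (F : Fin (k + 1) → Submodule R Δ) : Prop where
  zero : F 0 = ⊥
  last : F (Fin.last k) = ⊤
  chain : ∀ i : Fin k, F i.castSucc ≤ F i.succ
  simple : ∀ i : Fin k, IsSimpleModule R (gr F i)
  inj : ∀ i j : Fin k, Nonempty (gr F i ≃ₗ[R] gr F j) → i = j

/-- The graded piece of index `i` is a constituent of the submodule `A`: the filtration that `F`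
induces on `A` jumps at `i`. -/
def Occ (F : Fin (k + 1) → Submodule R Δ) (A : Submodule R Δ) (i : Fin k) : Prop :=
  ¬ A ⊓ F i.succ ≤ F i.castSucc

lemma Occ.mono {A B : Submodule R Δ} {i : Fin k} (h : A ≤ B) (hA : Occ F A i) : Occ F B i :=
  fun hB => hA ((inf_le_inf_right _ h).trans hB)

lemma IsMF.monotone (hF : IsMF F) : Monotone F := Fin.monotone_iff_le_succ.2 hF.chain

lemma IsMF.covBy (hF : IsMF F) (i : Fin k) : F i.castSucc ⋖ F i.succ :=
  (covBy_iff_quot_is_simple (hF.chain i)).2 (hF.simple i)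

lemma le_sup_of_covBy {A B C : Submodule R Δ} (h : B ⋖ A) (hC : C ≤ A) (hCB : ¬ C ≤ B) :
    A ≤ C ⊔ B := by
  rcases h.eq_or_eq le_sup_right (sup_le hC h.le) with h' | h'
  · exact absurd (sup_eq_right.1 h') hCB
  · exact h'.ge

lemma Occ.succ_le (hF : IsMF F) {A : Submodule R Δ} {i : Fin k} (h : Occ F A i) :
    F i.succ ≤ A ⊓ F i.succ ⊔ F i.castSucc :=
  le_sup_of_covBy (hF.covBy i) inf_le_right h

lemma Occ.equiv (hF : IsMF F) {A : Submodule R Δ} {i : Fin k} (h : Occ F A i) :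
    Nonempty (Subquot R (A ⊓ F i.succ) (A ⊓ F i.castSucc) ≃ₗ[R] gr F i) :=
  subquot_equiv inf_le_right (h.succ_le hF) (le_inf (inf_le_left.trans inf_le_left) inf_le_right)
    inf_le_right

lemma not_occ_bot (i : Fin k) : ¬ Occ F (⊥ : Submodule R Δ) i :=
  fun h => h (by simp)

lemma occ_top (hF : IsMF F) (i : Fin k) : Occ F (⊤ : Submodule R Δ) i := by
  intro h
  rw [top_inf_eq] at h
  exact (hF.covBy i).lt.not_ge h

/-- The form of the Jordan–Hölder theorem used here: if `A / B ≃ gr F i`, then the constituents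
of `A` are those of `B` together with `i`, and `i` is not a constituent of `B`. -/
lemma jordan_holder_step (hF : IsMF F) {A B : Submodule R Δ} {i : Fin k} (hBA : B ≤ A)
    (e : Nonempty (Subquot R A B ≃ₗ[R] gr F i)) :
    ¬ Occ F B i ∧ ∀ j, Occ F A j ↔ Occ F B j ∨ j = i := by
  obtain ⟨e⟩ := e
  have hcov : B ⋖ A := (covBy_iff_quot_is_simple hBA).2
    ((LinearEquiv.isSimpleModule_iff e).2 (hF.simple i))
  -- `p` is the step at which `A ⊓ F m` leaves `B`
  obtain ⟨p, hp1, hp2⟩ : ∃ p : Fin k, A ⊓ F p.castSucc ≤ B ∧ ¬ A ⊓ F p.succ ≤ B := by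
    by_contra! hcon
    have : ∀ m : Fin (k + 1), A ⊓ F m ≤ B := by
      intro m
      induction m using Fin.induction with
      | zero => rw [hF.zero, inf_bot_eq]; exact bot_le
      | succ p ih => exact hcon p ih
    have h := this (Fin.last k)
    rw [hF.last, inf_top_eq] at h
    exact hcov.lt.not_ge h
  have hA : A ≤ A ⊓ F p.succ ⊔ B := le_sup_of_covBy hcov inf_le_left hp2
  have hpA : Occ F A p := fun h => hp2 ((le_inf inf_le_left h).trans hp1)
  have hpB : ¬ Occ F B p := by
    intro h
    refine hp2 ?_
    calc A ⊓ F p.succ ≤ A ⊓ (B ⊓ F p.succ ⊔ F p.castSucc) := inf_le_inf_left _ (h.succ_le hF)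
      _ = B ⊓ F p.succ ⊔ F p.castSucc ⊓ A := by
        rw [inf_comm, sup_inf_assoc_of_le _ (inf_le_left.trans hBA)]
      _ ≤ B := sup_le inf_le_left (by rwa [inf_comm])
  have hpB' : B ⊓ F p.succ ≤ F p.castSucc := not_not.1 hpB
  have hip : p = i := by
    obtain ⟨e1⟩ := hpA.equiv hF
    obtain ⟨e2⟩ : Nonempty (Subquot R (A ⊓ F p.succ) (A ⊓ F p.castSucc) ≃ₗ[R] Subquot R A B) :=
      subquot_equiv inf_le_left hA
        (le_inf (inf_le_left.trans inf_le_left)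
          ((le_inf inf_le_right (inf_le_left.trans inf_le_right)).trans hpB')) hp1
    exact hF.inj _ _ ⟨e1.symm.trans (e2.trans e)⟩
  subst hip
  refine ⟨hpB, fun j => ⟨fun hj => ?_, ?_⟩⟩
  · by_contra! hcon
    obtain ⟨hjB, hjp⟩ := hcon
    have hjB : B ⊓ F j.succ ≤ F j.castSucc := not_not.1 hjB
    refine hj ?_
    rcases lt_or_gt_of_ne hjp with hlt | hgt
    · have h1 : F j.succ ≤ F p.castSucc := hF.monotone (by
        rw [Fin.le_def]; simpa using hlt)
      exact (le_inf ((inf_le_inf_left _ h1).trans hp1) inf_le_right).trans hjB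
    · have h1 : F p.succ ≤ F j.castSucc := hF.monotone (by
        rw [Fin.le_def]; simpa using hgt)
      calc A ⊓ F j.succ ≤ (A ⊓ F p.succ ⊔ B) ⊓ F j.succ := inf_le_inf_right _ hA
        _ = A ⊓ F p.succ ⊔ B ⊓ F j.succ := sup_inf_assoc_of_le _
            (inf_le_right.trans (h1.trans (hF.chain j)))
        _ ≤ F j.castSucc := sup_le (inf_le_right.trans h1) hjB
  · rintro (h | rfl)
    · exact h.mono hBA
    · exact hpA

/-- A constituent of `A` that is not one of `B ≤ A` is realized between `B` and `A`. -/
lemma exists_step (hF : IsMF F) {A B : Submodule R Δ} {i : Fin k} (hBA : B ≤ A)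
    (hA : Occ F A i) (hB : ¬ Occ F B i) :
    ∃ Z X, B ≤ Z ∧ Z ≤ X ∧ X ≤ A ∧ Nonempty (Subquot R X Z ≃ₗ[R] gr F i) := by
  have hB' : B ⊓ F i.succ ≤ F i.castSucc := not_not.1 hB
  refine ⟨A ⊓ F i.castSucc ⊔ B, A ⊓ F i.succ ⊔ B, le_sup_right,
    sup_le_sup_right (inf_le_inf_left _ (hF.chain i)) _, sup_le inf_le_left hBA, ?_⟩
  obtain ⟨e1⟩ := hA.equiv hF
  obtain ⟨e2⟩ : Nonempty (Subquot R (A ⊓ F i.succ) (A ⊓ F i.castSucc) ≃ₗ[R]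
      Subquot R (A ⊓ F i.succ ⊔ B) (A ⊓ F i.castSucc ⊔ B)) := by
    refine subquot_equiv le_sup_left (sup_le le_sup_left (le_sup_right.trans le_sup_right))
      ?_ le_sup_left
    refine le_inf (inf_le_left.trans inf_le_left) ?_
    calc A ⊓ F i.succ ⊓ (A ⊓ F i.castSucc ⊔ B)
        ≤ (A ⊓ F i.castSucc ⊔ B) ⊓ F i.succ :=
          le_inf inf_le_right (inf_le_left.trans inf_le_right)
      _ = A ⊓ F i.castSucc ⊔ B ⊓ F i.succ :=
          sup_inf_assoc_of_le _ (inf_le_right.trans (hF.chain i))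
      _ ≤ F i.castSucc := sup_le inf_le_right hB'
  exact ⟨e2.symm.trans e1⟩

/-- If `X / Z` is the constituent `i` and `X ≤ Z + M`, then `X / Z` comes from `M`. -/
lemma occ_of_le_sup (hF : IsMF F) {X Z M : Submodule R Δ} {i : Fin k} (hZX : Z ≤ X)
    (e : Nonempty (Subquot R X Z ≃ₗ[R] gr F i)) (h : X ≤ Z ⊔ M) : Occ F M i := by
  obtain ⟨e⟩ := e
  obtain ⟨e2⟩ : Nonempty (Subquot R (X ⊓ M) (Z ⊓ M) ≃ₗ[R] Subquot R X Z) := by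
    refine subquot_equiv inf_le_left ?_ (le_inf inf_le_right (inf_le_left.trans inf_le_right))
      inf_le_left
    calc X ≤ (Z ⊔ M) ⊓ X := le_inf h le_rfl
      _ = Z ⊔ M ⊓ X := sup_inf_assoc_of_le _ hZX
      _ ≤ X ⊓ M ⊔ Z := by rw [sup_comm, inf_comm]
  exact (((jordan_holder_step hF (inf_le_inf_right _ hZX) ⟨e2.trans e⟩).2 i).2
    (Or.inr rfl)).mono inf_le_right

/-- If `X / Z` is the constituent `i` and `X ∩ M ≤ Z`, then `X / Z` survives in the quotient by
`M`, so by multiplicity freeness `i` is not a constituent of `M`. -/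
lemma not_occ_of_inf_le (hF : IsMF F) {X Z M : Submodule R Δ} {i : Fin k} (hZX : Z ≤ X)
    (e : Nonempty (Subquot R X Z ≃ₗ[R] gr F i)) (h : X ⊓ M ≤ Z) : ¬ Occ F M i := by
  obtain ⟨e⟩ := e
  obtain ⟨e2⟩ : Nonempty (Subquot R X Z ≃ₗ[R] Subquot R (X ⊔ M) (Z ⊔ M)) := by
    refine subquot_equiv le_sup_left (sup_le le_sup_left (le_sup_right.trans le_sup_right)) ?_
      le_sup_left
    rw [inf_comm, sup_inf_assoc_of_le _ hZX]
    exact sup_le le_rfl (by rwa [inf_comm])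
  exact fun hM => (jordan_holder_step hF (sup_le_sup_right hZX _) ⟨e2.symm.trans e⟩).1
    (hM.mono le_sup_right)

lemma occ_inf (hF : IsMF F) {A B : Submodule R Δ} {i : Fin k} (hA : Occ F A i)
    (hB : Occ F B i) : Occ F (A ⊓ B) i := by
  by_contra h
  obtain ⟨Z, X, h1, h2, h3, e⟩ := exists_step hF inf_le_left hA h
  exact not_occ_of_inf_le hF h2 e ((inf_le_inf_right _ h3).trans h1) hB

lemma occ_sup (hF : IsMF F) {A B : Submodule R Δ} {i : Fin k} :
    Occ F (A ⊔ B) i ↔ Occ F A i ∨ Occ F B i := by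
  refine ⟨fun h => ?_, fun h => h.elim (Occ.mono le_sup_left) (Occ.mono le_sup_right)⟩
  by_contra! hcon
  obtain ⟨Z, X, h1, h2, h3, e⟩ := exists_step hF le_sup_left h hcon.1
  exact hcon.2 (occ_of_le_sup hF h2 e (h3.trans (sup_le_sup_right h1 _)))

/-- A submodule is determined by its constituents, and inclusion of submodules is inclusion of
sets of constituents. -/
lemma le_of_occ (hF : IsMF F) {A B : Submodule R Δ} (h : ∀ i, Occ F A i → Occ F B i) :
    A ≤ B := by
  have key : ∀ m : Fin (k + 1), A ⊓ F m ≤ B := by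
    intro m
    induction m using Fin.induction with
    | zero => rw [hF.zero, inf_bot_eq]; exact bot_le
    | succ p ih =>
      by_cases hp : Occ F A p
      · have hAB : Occ F (A ⊓ B) p := occ_inf hF hp (h p hp)
        calc A ⊓ F p.succ ≤ (A ⊓ B ⊓ F p.succ ⊔ F p.castSucc) ⊓ A :=
              le_inf (inf_le_right.trans (hAB.succ_le hF)) inf_le_left
          _ = A ⊓ B ⊓ F p.succ ⊔ F p.castSucc ⊓ A :=
              sup_inf_assoc_of_le _ (inf_le_left.trans inf_le_left)
          _ ≤ B := sup_le (inf_le_left.trans inf_le_right) (by rwa [inf_comm])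
      · exact (le_inf inf_le_left (not_not.1 hp)).trans ih
  have := key (Fin.last k)
  rwa [hF.last, inf_top_eq] at this

lemma finite_submodule (hF : IsMF F) : Finite (Submodule R Δ) := by
  refine Finite.of_injective (fun A => {i | Occ F A i}) fun A B h => ?_
  have h' : ∀ i, Occ F A i ↔ Occ F B i := fun i => Set.ext_iff.1 h i
  exact le_antisymm (le_of_occ hF fun i => (h' i).1) (le_of_occ hF fun i => (h' i).2)

/-- There is a smallest submodule having `i` as a constituent. -/
lemma exists_least (hF : IsMF F) (i : Fin k) :
    ∃ P, Occ F P i ∧ ∀ A, Occ F A i → P ≤ A := by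
  have := finite_submodule hF
  obtain ⟨P, hP⟩ := (Set.toFinite {A | Occ F A i}).exists_minimal ⟨⊤, occ_top hF i⟩
  exact ⟨P, hP.1, fun A hA =>
    (hP.2 (occ_inf hF hP.1 hA) inf_le_left).trans inf_le_right⟩

/-- There is a largest submodule not having `i` as a constituent. -/
lemma exists_greatest (hF : IsMF F) (i : Fin k) :
    ∃ Q, ¬ Occ F Q i ∧ ∀ A, ¬ Occ F A i → A ≤ Q := by
  have := finite_submodule hF
  obtain ⟨Q, hQ⟩ := (Set.toFinite {A | ¬ Occ F A i}).exists_maximal ⟨⊥, not_occ_bot i⟩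
  exact ⟨Q, hQ.1, fun A hA => le_sup_right.trans
    (hQ.2 (fun h => ((occ_sup hF).1 h).elim hQ.1 hA) le_sup_left)⟩

/-! ### The order relation on the constituents -/

/-- If `i` is a constituent of the smallest submodule `P` having `j` as a constituent, the
quotient of `P` by its largest submodule avoiding `i` has socle `gr F i` and cosocle `gr F j`. -/
lemma exists_subquot (hF : IsMF F) {i j : Fin k} {P : Submodule R Δ} (hPj : Occ F P j)
    (hP : ∀ A, Occ F A j → P ≤ A) (hPi : Occ F P i) :
    ∃ X Y : Submodule R Δ, Y ≤ X ∧
      Nonempty (↥(socle R (Subquot R X Y)) ≃ₗ[R] (gr F i)) ∧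
      Nonempty ((Subquot R X Y ⧸ radical R (Subquot R X Y)) ≃ₗ[R] (gr F j)) := by
  obtain ⟨Q, hQi, hQ⟩ := exists_greatest hF i
  obtain ⟨Q', hQj, hQ'⟩ := exists_greatest hF j
  have hYi : ¬ Occ F (P ⊓ Q) i := fun h => hQi (h.mono inf_le_right)
  have hZj : ¬ Occ F (P ⊓ Q') j := fun h => hQj (h.mono inf_le_right)
  refine ⟨P, P ⊓ Q, inf_le_left, ?_, ?_⟩
  · obtain ⟨Z, W, h1, h2, h3, ⟨e⟩⟩ := exists_step hF inf_le_left hPi hYi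
    have hZ := jordan_holder_step hF h2 ⟨e⟩
    obtain rfl : Z = P ⊓ Q := le_antisymm (le_inf (h2.trans h3) (hQ _ hZ.1)) h1
    obtain ⟨e2⟩ := socle_equiv h2 h3 ((LinearEquiv.isSimpleModule_iff e).2 (hF.simple i)) (by
      intro A hYA hAP hAY
      refine le_of_occ hF fun l hl => ?_
      rcases (hZ.2 l).1 hl with h | rfl
      · exact h.mono hYA
      · by_contra h
        exact hAY (le_inf hAP (hQ _ h)))
    exact ⟨e2.trans e⟩
  · obtain ⟨Z, W, h1, h2, h3, ⟨e⟩⟩ := exists_step hF inf_le_left hPj hZj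
    have hZ := jordan_holder_step hF h2 ⟨e⟩
    obtain rfl : Z = P ⊓ Q' := le_antisymm (le_inf (h2.trans h3) (hQ' _ hZ.1)) h1
    obtain rfl : W = P := le_antisymm h3 (hP _ ((hZ.2 j).2 (Or.inr rfl)))
    obtain ⟨e2⟩ := cosocle_equiv (X := W) (Y := W ⊓ Q) (Z := W ⊓ Q')
      (le_inf inf_le_left (hQ' _ fun h =>
        hQi (hPi.mono ((hP _ h).trans inf_le_right)))) inf_le_left
      (fun h => hZj (hPj.mono h))
      (fun A _ hAW hWA => le_inf hAW (hQ' _ fun h => hWA (hP _ h)))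
    exact ⟨e2.trans e⟩

/-- If a subquotient of `Δ` has socle `gr F i` and cosocle `gr F j`, every submodule with
constituent `j` has constituent `i`. -/
lemma occ_of_subquot (hF : IsMF F) {i j : Fin k} {X Y M : Submodule R Δ} (hYX : Y ≤ X)
    (hs : Nonempty (↥(socle R (Subquot R X Y)) ≃ₗ[R] (gr F i)))
    (hc : Nonempty ((Subquot R X Y ⧸ radical R (Subquot R X Y)) ≃ₗ[R] (gr F j)))
    (hM : Occ F M j) : Occ F M i := by
  obtain ⟨es⟩ := hs
  obtain ⟨ec⟩ := hc
  obtain ⟨e⟩ := quot_pull_equiv (radical R (Subquot R X Y))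
  -- otherwise `X ⊓ M` would lie in the radical and `j` could not occur in `M`
  have hXM : ¬ X ⊓ M ≤ Y := fun h =>
    not_occ_of_inf_le hF (pull_le _) ⟨e.trans ec⟩ (h.trans (le_pull hYX _)) hM
  obtain ⟨N, hN⟩ := exists_pull_eq (X := X) (Y := Y) (A := X ⊓ M ⊔ Y) le_sup_right
    (sup_le inf_le_left hYX)
  have hN0 : N ≠ ⊥ := by
    rintro rfl
    rw [pull_bot hYX] at hN
    exact hXM (le_sup_left.trans hN.ge)
  have hsoc := isSimpleModule_iff_isAtom.1
    ((LinearEquiv.isSimpleModule_iff es).2 (hF.simple i))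
  have := finite_submodule hF
  have : Finite (Submodule R (Subquot R X Y)) :=
    Finite.of_injective (fun N => pull N) fun N N' h =>
      le_antisymm (pull_le_pull.1 (le_of_eq h)) (pull_le_pull.1 (le_of_eq h.symm))
  obtain ⟨N', hN', hN'N⟩ := (eq_bot_or_exists_atom_le N).resolve_left hN0
  have hsN : socle R (Subquot R X Y) ≤ N := by
    rcases hsoc.le_iff.1 (le_socle (isSimpleModule_iff_isAtom.2 hN')) with h | h
    · exact absurd h hN'.1
    · exact h ▸ hN'N
  obtain ⟨e'⟩ := pull_equiv (socle R (Subquot R X Y))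
  refine occ_of_le_sup hF (le_pull hYX _) ⟨e'.trans es⟩ ?_
  calc pull (socle R (Subquot R X Y)) ≤ pull N := pull_le_pull.2 hsN
    _ = X ⊓ M ⊔ Y := hN
    _ ≤ Y ⊔ M := sup_le (inf_le_right.trans le_sup_right) le_sup_left

end Constituents

variable (R)

/-- **Module-theoretic content of Lemma 2.6(1).** Let `Δ` be a finite-length multiplicity-free
module with a filtration `0 = F₀ ⊊ ⋯ ⊊ F_k = Δ` with simple (pairwise non-isomorphic) graded
pieces `Δ_i`, and let `C` be the set of pairs `(i, j)`, `i ≠ j`, such that `Δ` admits a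
subquotient with socle `≅ Δ_i` and cosocle `≅ Δ_j`.  Then for a permutation `u` of
`{1, …, k}`, `Δ` admits a filtration with `i`-th graded piece `≅ Δ_{u⁻¹(i)}` if and only if
`u i < u j` for every `(i, j) ∈ C`. -/
theorem filtration_reordering
    (Δ : Type) [AddCommGroup Δ] [Module R Δ]
    (k : ℕ) (F : Fin (k + 1) → Submodule R Δ)
    (hF0 : F 0 = ⊥) (hFtop : F (Fin.last k) = ⊤)
    (hchain : ∀ i : Fin k, F i.castSucc ≤ F i.succ)
    (hsimple : ∀ i : Fin k, IsSimpleModule R (gr F i))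
    (hmf : ∀ i j : Fin k, i ≠ j → IsEmpty ((gr F i) ≃ₗ[R] (gr F j)))
    (u : Equiv.Perm (Fin k)) :
    (∃ F' : Fin (k + 1) → Submodule R Δ, F' 0 = ⊥ ∧ F' (Fin.last k) = ⊤ ∧
        (∀ i : Fin k, F' i.castSucc ≤ F' i.succ) ∧
        ∀ i : Fin k, Nonempty ((gr F' i) ≃ₗ[R] (gr F (u.symm i)))) ↔
      ∀ i j : Fin k, i ≠ j →
        (∃ X Y : Submodule R Δ, Y ≤ X ∧
          Nonempty (↥(socle R (Subquot R X Y)) ≃ₗ[R] (gr F i)) ∧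
          Nonempty ((Subquot R X Y ⧸ radical R (Subquot R X Y)) ≃ₗ[R] (gr F j))) →
        u i < u j := by
  have hF : IsMF F := ⟨hF0, hFtop, hchain, hsimple, fun i j e => by
    by_contra h
    exact (hmf i j h).false e.some⟩
  constructor
  · rintro ⟨F', h0, -, hch, he⟩ i j hij ⟨X, Y, hYX, hs, hc⟩
    have key : ∀ (a : Fin (k + 1)) (l : Fin k), Occ F (F' a) l ↔ (u l).castSucc < a := by
      intro a
      induction a using Fin.induction with
      | zero =>
        intro l
        rw [h0]
        exact iff_of_false (not_occ_bot l) (by simp)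
      | succ a ih =>
        intro l
        rw [(jordan_holder_step hF (hch a) (he a)).2 l, ih l, Equiv.eq_symm_apply,
          Fin.castSucc_lt_castSucc_iff, Fin.castSucc_lt_succ_iff, le_iff_lt_or_eq]
    have h := (key (u j).succ i).1 (occ_of_subquot hF hYX hs hc
      ((key (u j).succ j).2 Fin.castSucc_lt_succ))
    rw [Fin.castSucc_lt_succ_iff] at h
    exact lt_of_le_of_ne h fun h' => hij (u.injective h')
  · intro hC
    have hex : ∀ a : Fin (k + 1), ∃ G : Submodule R Δ,
        ∀ l, Occ F G l ↔ (u l).castSucc < a := by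
      intro a
      induction a using Fin.induction with
      | zero => exact ⟨⊥, fun l => iff_of_false (not_occ_bot l) (by simp)⟩
      | succ a ih =>
        obtain ⟨G, hG⟩ := ih
        obtain ⟨P, hPj, hP⟩ := exists_least hF (u.symm a)
        refine ⟨G ⊔ P, fun l => ?_⟩
        rw [occ_sup hF, hG, Fin.castSucc_lt_castSucc_iff, Fin.castSucc_lt_succ_iff]
        constructor
        · rintro (h | h)
          · exact h.le
          · rcases eq_or_ne l (u.symm a) with rfl | hne
            · simp
            · simpa using (hC l (u.symm a) hne (exists_subquot hF hPj hP h)).le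
        · intro h
          rcases h.lt_or_eq with h | rfl
          · exact Or.inl h
          · exact Or.inr (by simpa using hPj)
    choose G hG using hex
    have hGmono : ∀ i : Fin k, G i.castSucc ≤ G i.succ := fun i =>
      le_of_occ hF fun l hl => (hG _ l).2 (((hG _ l).1 hl).trans Fin.castSucc_lt_succ)
    refine ⟨G, ?_, ?_, hGmono, fun i => ?_⟩
    · exact le_bot_iff.1 (le_of_occ hF fun l hl => absurd ((hG _ l).1 hl) (by simp))
    · exact top_le_iff.1 (le_of_occ hF fun l _ => (hG _ l).2 (Fin.castSucc_lt_last _))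
    · obtain ⟨Z, X, h1, h2, h3, e⟩ := exists_step hF (i := u.symm i) (hGmono i)
        ((hG _ _).2 (by simp)) (fun h => by simpa using (hG _ _).1 h)
      have hZ := jordan_holder_step hF h2 e
      have hZG : Z = G i.castSucc := by
        refine le_antisymm (le_of_occ hF fun l hl => (hG _ l).2 ?_) h1
        have h4 := (hG _ l).1 (hl.mono (h2.trans h3))
        rw [Fin.castSucc_lt_succ_iff] at h4
        refine Fin.castSucc_lt_castSucc_iff.2 (lt_of_le_of_ne h4 fun h => hZ.1 ?_)
        rwa [← h, Equiv.symm_apply_apply]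
      have hXG : X = G i.succ := by
        refine le_antisymm h3 (le_of_occ hF fun l hl => (hZ.2 l).2 ?_)
        have h4 := (hG _ l).1 hl
        rw [Fin.castSucc_lt_succ_iff] at h4
        rcases h4.lt_or_eq with h | h
        · exact Or.inl (((hG _ l).2 (Fin.castSucc_lt_castSucc_iff.2 h)).mono h1)
        · exact Or.inr (by rw [← h, Equiv.symm_apply_apply])
      subst hZG hXG
      exact e

end Paper14
end
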